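/- arXiv:1712.01973 — 3 statements merged into one kernel-verified Lean document; each statement's English description precedes it below -/
import Mathlib

section
/- Let P and Q be full-dimensional semi-rational polytopes in ℝ^d and let D ⊆ (0, ∞) be a dense subset of (0, ∞). Suppose L_{P+w}(s) = L_{Q+w}(s) for every integer vector w ∈ ℤ^d and every s ∈ D. Then P = Q. -/
open Set MeasureTheory Pointwise

/-- The set of integer lattice points in `ℝ^d` (as `Fin d → ℝ`). -/
def latticePts (d : ℕ) : Set (Fin d → ℝ) := {x | ∀ i, ∃ m : ℤ, x i = m}

/-- The real-parameter Ehrhart function: number of lattice points in `s • P`. -/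
noncomputable def ehrhart {d : ℕ} (P : Set (Fin d → ℝ)) (s : ℝ) : ℕ :=
  ((s • P) ∩ latticePts d).ncard

/-- Translate of a set by a vector. -/
def translateSet {d : ℕ} (P : Set (Fin d → ℝ)) (v : Fin d → ℝ) : Set (Fin d → ℝ) :=
  (fun x => x + v) '' P

/-- A polytope: convex hull of a nonempty finite set of points. -/
def IsPolytope {d : ℕ} (P : Set (Fin d → ℝ)) : Prop :=
  ∃ V : Finset (Fin d → ℝ), V.Nonempty ∧ P = convexHull ℝ (V : Set (Fin d → ℝ))

/-- A rational polytope: convex hull of a nonempty finite set of rational points. -/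
def IsRationalPolytope {d : ℕ} (P : Set (Fin d → ℝ)) : Prop :=
  ∃ V : Finset (Fin d → ℝ), V.Nonempty ∧ (∀ v ∈ V, ∀ i, ∃ q : ℚ, v i = (q : ℝ)) ∧
    P = convexHull ℝ (V : Set (Fin d → ℝ))

/-- Standard inner product on `Fin d → ℝ`. -/
def dotProd {d : ℕ} (a x : Fin d → ℝ) : ℝ := ∑ i, a i * x i

/-- A semi-rational polytope: a polytope expressible as a finite intersection of
half-spaces with integer normal vectors. -/
def IsSemiRationalPolytope {d : ℕ} (P : Set (Fin d → ℝ)) : Prop :=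
  IsPolytope P ∧ ∃ (n : ℕ) (a : Fin n → Fin d → ℤ) (b : Fin n → ℝ),
    P = ⋂ i, {x : Fin d → ℝ | dotProd (fun j => (a i j : ℝ)) x ≤ b i}

/-!
If `s` is positive and smaller than the reciprocal of the diameter of `P ∪ Q`, then `s • (P + w)`
and `s • (Q + w)` contain at most one lattice point between them, so equality of the two counts
means that they contain the same lattice points. Hence `P` and `Q` have the same members of the form
`s⁻¹ • m - w` with `m` and `w` integer vectors. For a fixed irrational `s` these points are dense,
and they remain so if `s` is only a limit of admissible parameters. Two sets that are the closures
of their interiors and agree on a dense set are equal.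
-/

open Filter Topology Bornology

section DenseGrid

variable {ι : Type*}

/-- The points `s⁻¹ • m - w` with `m` and `w` integer vectors. When `ι = Fin d` and `s ≠ 0`, these
are the points whose membership in `P` says whether a lattice point `m` lies in `s • (P + w)`. -/
def ehrhartGrid (ι : Type*) (s : ℝ) : Set (ι → ℝ) :=
  {x | ∀ i, ∃ m w : ℤ, x i = s⁻¹ * m - w}

lemma dense_inv_mul_intCast_sub_intCast {s : ℝ} (hs : Irrational s) :
    Dense {x : ℝ | ∃ m w : ℤ, x = s⁻¹ * m - w} := by
  have hdense : Dense (AddSubgroup.closure {s⁻¹, 1} : Set ℝ) :=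
    dense_addSubgroupClosure_pair_iff.2 (by simpa using hs.inv)
  refine hdense.mono fun x hx => ?_
  obtain ⟨m, w, rfl⟩ := AddSubgroup.mem_closure_pair.1 hx
  exact ⟨m, -w, by simp [mul_comm]⟩

lemma dense_ehrhartGrid {s : ℝ} (hs : Irrational s) : Dense (ehrhartGrid ι s) := by
  convert dense_pi univ fun (_ : ι) _ => dense_inv_mul_intCast_sub_intCast hs
  ext x
  simp only [ehrhartGrid, mem_univ_pi, mem_ofPred_eq]

lemma ehrhartGrid_subset_closure_biUnion {T : Set ℝ} {s : ℝ} (hs : s ≠ 0) (hsT : s ∈ closure T) :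
    ehrhartGrid ι s ⊆ closure (⋃ t ∈ T, ehrhartGrid ι t) := by
  intro x hx
  choose m w hmw using hx
  let gridPoint : ℝ → ι → ℝ := fun t i => t⁻¹ * m i - w i
  have hcont : ContinuousAt gridPoint s := by fun_prop (disch := assumption)
  have hmaps : MapsTo gridPoint T (⋃ t ∈ T, ehrhartGrid ι t) := fun t ht =>
    mem_biUnion ht fun i => ⟨m i, w i, rfl⟩
  rw [show x = gridPoint s from funext hmw]
  exact hcont.continuousWithinAt.mem_closure hsT hmaps

lemma dense_biUnion_ehrhartGrid {T : Set ℝ} {s : ℝ} (hs : Irrational s) (hsT : s ∈ closure T) :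
    Dense (⋃ t ∈ T, ehrhartGrid ι t) :=
  dense_closure.1 <|
    (dense_ehrhartGrid hs).mono (ehrhartGrid_subset_closure_biUnion hs.ne_zero hsT)

end DenseGrid

section Topology

variable {X : Type*} [TopologicalSpace X] {A B E : Set X}

lemma subset_of_inter_dense_subset (hA : A ⊆ closure (interior A)) (hB : IsClosed B)
    (hE : Dense E) (h : A ∩ E ⊆ B) : A ⊆ B :=
  calc A ⊆ closure (interior A) := hA
    _ ⊆ closure (interior A ∩ E) :=
      closure_minimal (hE.open_subset_closure_inter isOpen_interior) isClosed_closure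
    _ ⊆ B := closure_minimal ((inter_subset_inter_left E interior_subset).trans h) hB

lemma eq_of_forall_mem_dense_iff (hA : closure (interior A) = A) (hB : closure (interior B) = B)
    (hE : Dense E) (h : ∀ x ∈ E, x ∈ A ↔ x ∈ B) : A = B :=
  Subset.antisymm
    (subset_of_inter_dense_subset hA.ge (hB ▸ isClosed_closure) hE fun x hx => (h x hx.2).1 hx.1)
    (subset_of_inter_dense_subset hB.ge (hA ▸ isClosed_closure) hE fun x hx => (h x hx.2).2 hx.1)

end Topology

lemma eq_of_subsingleton_union_of_ncard_eq {α : Type*} {A B : Set α} (h : (A ∪ B).Subsingleton)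
    (hcard : A.ncard = B.ncard) : A = B := by
  have hfin : (A ∪ B).Finite := h.finite
  rcases A.eq_empty_or_nonempty with rfl | ⟨a, ha⟩
  · rw [ncard_empty] at hcard
    exact ((ncard_eq_zero (hfin.subset subset_union_right)).1 hcard.symm).symm
  · have hBA : B ⊆ A := fun b hb => h (Or.inl ha) (Or.inr hb) ▸ ha
    exact (eq_of_subset_of_ncard_le hBA hcard.le (hfin.subset subset_union_left)).symm

section LatticePoints

variable {d : ℕ} {P Q : Set (Fin d → ℝ)} {s : ℝ}

lemma eq_of_mem_latticePts_of_dist_lt_one {x y : Fin d → ℝ} (hx : x ∈ latticePts d)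
    (hy : y ∈ latticePts d) (hxy : dist x y < 1) : x = y := by
  funext i
  obtain ⟨m, hm⟩ := hx i
  obtain ⟨n, hn⟩ := hy i
  have hmn : dist m n < 1 := by
    rw [← Int.dist_cast_real, ← hm, ← hn]
    exact (dist_le_pi_dist x y i).trans_lt hxy
  rw [hm, hn, Int.pairwise_one_le_dist.eq hmn.not_ge]

lemma mem_smul_translateSet_iff (hs : s ≠ 0) {v x : Fin d → ℝ} :
    x ∈ s • translateSet P v ↔ s⁻¹ • x - v ∈ P := by
  simp only [mem_smul_set_iff_inv_smul_mem₀ hs, translateSet, mem_image, ← eq_sub_iff_add_eq,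
    exists_eq_right]

lemma smul_translateSet_inter_latticePts_subsingleton (hP : IsBounded P) (hs : 0 < s)
    (hdiam : s * Metric.diam P < 1) (v : Fin d → ℝ) :
    (s • translateSet P v ∩ latticePts d).Subsingleton := by
  rintro _ ⟨⟨_, ⟨x, hx, rfl⟩, rfl⟩, hxlat⟩ _ ⟨⟨_, ⟨y, hy, rfl⟩, rfl⟩, hylat⟩
  refine eq_of_mem_latticePts_of_dist_lt_one hxlat hylat ?_
  calc dist (s • (x + v)) (s • (y + v)) = s * dist x y := by
        rw [dist_smul₀, dist_add_right, Real.norm_of_nonneg hs.le]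
    _ ≤ s * Metric.diam P := by gcongr; exact Metric.dist_le_diam_of_mem hP hx hy
    _ < 1 := hdiam

lemma smul_translateSet_inter_latticePts_eq_of_ehrhart_eq (hbdd : IsBounded (P ∪ Q)) (hs : 0 < s)
    (hdiam : s * Metric.diam (P ∪ Q) < 1) {v : Fin d → ℝ}
    (h : ehrhart (translateSet P v) s = ehrhart (translateSet Q v) s) :
    s • translateSet P v ∩ latticePts d = s • translateSet Q v ∩ latticePts d := by
  refine eq_of_subsingleton_union_of_ncard_eq ?_ h
  rw [← union_inter_distrib_right, ← smul_set_union, translateSet, translateSet, ← image_union]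
  exact smul_translateSet_inter_latticePts_subsingleton hbdd hs hdiam v

lemma mem_iff_mem_of_mem_ehrhartGrid (hbdd : IsBounded (P ∪ Q)) (hs : 0 < s)
    (hdiam : s * Metric.diam (P ∪ Q) < 1)
    (h : ∀ w : Fin d → ℤ, ehrhart (translateSet P (fun i => (w i : ℝ))) s =
      ehrhart (translateSet Q (fun i => (w i : ℝ))) s)
    {x : Fin d → ℝ} (hx : x ∈ ehrhartGrid (Fin d) s) : x ∈ P ↔ x ∈ Q := by
  choose m w hmw using hx
  have hmem_iff (K : Set (Fin d → ℝ)) : x ∈ K ↔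
      (fun i => (m i : ℝ)) ∈ s • translateSet K (fun i => (w i : ℝ)) ∩ latticePts d := by
    have hlat : (fun i => (m i : ℝ)) ∈ latticePts d := fun i => ⟨m i, rfl⟩
    rw [show x = s⁻¹ • (fun i => (m i : ℝ)) - fun i => (w i : ℝ) from funext hmw,
      ← mem_smul_translateSet_iff hs.ne', mem_inter_iff, and_iff_left hlat]
  rw [hmem_iff P, hmem_iff Q,
    smul_translateSet_inter_latticePts_eq_of_ehrhart_eq hbdd hs hdiam (h w)]

end LatticePoints

theorem stmt16_general {d : ℕ} {P Q : Set (Fin d → ℝ)} (hPbdd : IsBounded P) (hQbdd : IsBounded Q)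
    (hP : closure (interior P) = P) (hQ : closure (interior Q) = Q)
    {D : Set ℝ} (hD : ∃ᶠ s in 𝓝[>] 0, Irrational s ∧ s ∈ closure D)
    (h : ∀ (w : Fin d → ℤ), ∀ s ∈ D,
      ehrhart (translateSet P (fun i => (w i : ℝ))) s =
      ehrhart (translateSet Q (fun i => (w i : ℝ))) s) :
    P = Q := by
  let U : Set ℝ := {s | 0 < s ∧ s * Metric.diam (P ∪ Q) < 1}
  have hUopen : IsOpen U :=
    (isOpen_lt continuous_const continuous_id).inter
      (isOpen_lt (continuous_mul_const _) continuous_const)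
  have hUsmall : ∀ᶠ s in 𝓝[>] 0, s ∈ U :=
    eventually_mem_nhdsWithin.and <| nhdsWithin_le_nhds <|
      (continuous_mul_const (Metric.diam (P ∪ Q))).continuousAt.eventually_lt_const (by simp)
  obtain ⟨s, ⟨hsirr, hsD⟩, hsU⟩ := (hD.and_eventually hUsmall).exists
  have hdense : Dense (⋃ t ∈ U ∩ D, ehrhartGrid (Fin d) t) :=
    dense_biUnion_ehrhartGrid hsirr (hUopen.inter_closure ⟨hsU, hsD⟩)
  refine eq_of_forall_mem_dense_iff hP hQ hdense fun x hx => ?_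
  obtain ⟨t, ⟨⟨htpos, htdiam⟩, htD⟩, hxt⟩ := mem_iUnion₂.1 hx
  exact mem_iff_mem_of_mem_ehrhartGrid (hPbdd.union hQbdd) htpos htdiam (fun w => h w t htD) hxt

lemma frequently_irrational_nhdsGT (a : ℝ) : ∃ᶠ s in 𝓝[>] a, Irrational s := by
  refine (nhdsGT_basis a).frequently_iff.2 fun b hab => ?_
  obtain ⟨s, hs, has, hsb⟩ := exists_irrational_btwn hab
  exact ⟨s, ⟨has, hsb⟩, hs⟩

namespace IsPolytope

variable {d : ℕ} {P : Set (Fin d → ℝ)}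

lemma isCompact (hP : IsPolytope P) : IsCompact P := by
  obtain ⟨V, -, rfl⟩ := hP
  exact V.finite_toSet.isCompact_convexHull (𝕜 := ℝ)

lemma convex (hP : IsPolytope P) : Convex ℝ P := by
  obtain ⟨V, -, rfl⟩ := hP
  exact convex_convexHull ℝ _

lemma closure_interior_eq (hP : IsPolytope P) (hfull : (interior P).Nonempty) :
    closure (interior P) = P :=
  (hP.convex.closure_interior_eq_closure_of_nonempty_interior hfull).trans
    hP.isCompact.isClosed.closure_eq

end IsPolytope

/-- two full-dimensional semi-rational polytopes whose Ehrhart functions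
agree on all integer translates for a dense set of positive dilation parameters are
equal. -/
theorem stmt16 {d : ℕ} (P Q : Set (Fin d → ℝ))
    (hP : IsSemiRationalPolytope P) (hQ : IsSemiRationalPolytope Q)
    (hPfull : (interior P).Nonempty) (hQfull : (interior Q).Nonempty)
    (D : Set ℝ) (hD : D ⊆ Set.Ioi (0 : ℝ)) (hDdense : Set.Ioi (0 : ℝ) ⊆ closure D)
    (h : ∀ (w : Fin d → ℤ), ∀ s ∈ D,
      ehrhart (translateSet P (fun i => (w i : ℝ))) s =
      ehrhart (translateSet Q (fun i => (w i : ℝ))) s) :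
    P = Q := by
  have hirr : ∃ᶠ s in 𝓝[>] 0, Irrational s ∧ s ∈ closure D :=
    (frequently_irrational_nhdsGT 0).and_eventually (eventually_mem_nhdsWithin.mono hDdense)
  exact stmt16_general hP.1.isCompact.isBounded hQ.1.isCompact.isBounded
    (hP.1.closure_interior_eq hPfull) (hQ.1.closure_interior_eq hQfull) hirr h
end

section
/- For all integers w₁, w₂ and every real s > 0, there do not exist integers x₁, x₂ with x₁ = s·(ln 2 + w₁) and x₂ = s·(ln 3 + w₂). Consequently, for d ≥ 2 and M = {x ∈ ℝ^d : x₁ = ln 2, x₂ = ln 3}, the set s•(M + w) contains no point of ℤ^d for any integer vector w ∈ ℤ^d and any real s > 0. -/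
open Set MeasureTheory Pointwise

/-!
Hermite's approximations to `exp` show that `exp q` is irrational for every nonzero rational `q`, so
the logarithm of a positive rational `q ≠ 1` is irrational. An integer relation between `1`, `log a`
and `log b` says that the logarithm of some `a ^ m * b ^ n` is an integer, hence that
`a ^ m * b ^ n = 1`; so `1`, `log a`, `log b` are linearly independent over `ℚ` when `a` and `b` are
multiplicatively independent. If `x₁ = s * (log a + w₁)` and `x₂ = s * (log b + w₂)` were both
rational, eliminating `s` would give the forbidden relation
`x₁ * (log b + w₂) = x₂ * (log a + w₁)`.
-/

open Filter Polynomial in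
lemma frequently_prime_exp_intCast_approx {N : ℤ} (hN : N ≠ 0) {ε : ℝ} (hε : 0 < ε) :
    ∃ᶠ p : ℕ in atTop, p.Prime ∧
      ∃ n m : ℤ, ¬ (p : ℤ) ∣ n ∧ |n * Real.exp N - p * m| < ε := by
  obtain ⟨c, hc⟩ :=
    LindemannWeierstrass.exp_polynomial_approx (X - C N : ℤ[X]) (by simpa using hN)
  have bound_tendsto : Tendsto (fun p : ℕ => c ^ p / ((p - 1).factorial : ℝ)) atTop (nhds 0) := by
    rw [← tendsto_add_atTop_iff_nat 1]
    simpa [pow_succ', mul_div_assoc] using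
      (FloorSemiring.tendsto_pow_div_factorial_atTop c).const_mul c
  have primes_frequently : ∃ᶠ p : ℕ in atTop, p.Prime :=
    Nat.frequently_atTop_iff_infinite.2 Nat.infinite_setOfPred_prime
  refine (primes_frequently.and_eventually ((bound_tendsto.eventually_lt_const hε).and
    (eventually_gt_atTop N.natAbs))).mono fun p ⟨hp, hpε, hpN⟩ => ⟨hp, ?_⟩
  obtain ⟨n, hn, g, -, hg⟩ := hc p (by simpa using hpN) hp
  refine ⟨n, g.eval N, hn, lt_of_le_of_lt ?_ hpε⟩
  have root : (N : ℂ) ∈ (X - C N : ℤ[X]).aroots ℂ :=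
    mem_aroots.2 ⟨X_sub_C_ne_zero N, by simp⟩
  have aeval_root : aeval (N : ℂ) g = (g.eval N : ℤ) := by
    simpa using aeval_algebraMap_apply ℂ N g
  have error_eq : n • Complex.exp N - p • aeval (N : ℂ) g =
      ((n * Real.exp N - p * g.eval N : ℝ) : ℂ) := by
    simp [aeval_root]
  simpa only [error_eq, Complex.norm_real, Real.norm_eq_abs] using hg root

open Filter in
lemma irrational_of_frequently_prime_approx {x : ℝ} (hx : x ≠ 0)
    (approx : ∀ ε > 0, ∃ᶠ p : ℕ in atTop, p.Prime ∧
      ∃ n m : ℤ, ¬ (p : ℤ) ∣ n ∧ |n * x - p * m| < ε) :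
    Irrational x := by
  rintro ⟨q, rfl⟩
  have num_ne_zero : q.num ≠ 0 := by simpa using hx
  have den_pos : (0 : ℝ) < q.den := mod_cast q.pos
  obtain ⟨p, ⟨hp, n, m, hn, hlt⟩, hpq⟩ :=
    ((approx (q.den : ℝ)⁻¹ (inv_pos.2 den_pos)).and_eventually
      (eventually_gt_atTop q.num.natAbs)).exists
  -- Multiplied by the denominator, the error is an integer smaller than `1`.
  have abs_lt_one : |n * q.num - p * (m * q.den)| < 1 := by
    have scaled : ((n * q.num - p * (m * q.den) : ℤ) : ℝ) = q.den * (n * q - p * m) := by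
      have den_mul : (q.den * q : ℝ) = q.num := mod_cast q.den_mul_eq_num
      push_cast
      rw [← den_mul]
      ring
    have : |((n * q.num - p * (m * q.den) : ℤ) : ℝ)| < 1 := by
      rwa [scaled, abs_mul, abs_of_pos den_pos, ← lt_inv_mul_iff₀ den_pos, mul_one]
    exact_mod_cast this
  have dvd : (p : ℤ) ∣ n * q.num :=
    ⟨m * q.den, sub_eq_zero.1 (Int.abs_lt_one_iff.1 abs_lt_one)⟩
  have dvd_num := ((Nat.prime_iff_prime_int.1 hp).dvd_or_dvd dvd).resolve_left hn
  exact hpq.not_ge (Nat.le_of_dvd (Int.natAbs_pos.2 num_ne_zero) (Int.natCast_dvd.1 dvd_num))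

lemma irrational_exp_ratCast {q : ℚ} (hq : q ≠ 0) : Irrational (Real.exp q) := by
  have exp_num : Irrational (Real.exp q.num) :=
    irrational_of_frequently_prime_approx (Real.exp_ne_zero _) fun _ hε =>
      frequently_prime_exp_intCast_approx (Rat.num_ne_zero.2 hq) hε
  have exp_pow_den : Real.exp q ^ q.den = Real.exp q.num := by
    rw [← Real.exp_nat_mul]
    exact_mod_cast congrArg (fun r : ℚ => Real.exp r) q.den_mul_eq_num
  exact Irrational.of_pow q.den (exp_pow_den ▸ exp_num)

lemma irrational_log_ratCast {q : ℚ} (hq : 0 < q) (hq1 : q ≠ 1) : Irrational (Real.log q) := by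
  rintro ⟨r, hr⟩
  have exp_eq : Real.exp r = q := by rw [hr, Real.exp_log (mod_cast hq)]
  have hr0 : r ≠ 0 := by
    rintro rfl
    exact hq1 (mod_cast (by simpa using exp_eq.symm : (q : ℝ) = 1))
  exact irrational_exp_ratCast hr0 ⟨q, exp_eq.symm⟩

/-- Two elements of a group, or of a group with zero such as `ℚ`, are multiplicatively independent
if no nontrivial product of their integer powers is `1`. In `ℚ` the element `0` is not excluded, as
`0 ^ m = 0` for `m ≠ 0`, negative `m` included. -/
def MultiplicativelyIndependent {G : Type*} [DivInvMonoid G] (a b : G) : Prop :=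
  ∀ m n : ℤ, a ^ m * b ^ n = 1 → m = 0 ∧ n = 0

lemma left_exponent_eq_zero_of_coprime {a b : ℕ} (ha : 1 < a) (hb : b ≠ 0) (hab : a.Coprime b)
    {m n : ℤ} (h : (a : ℚ) ^ m * (b : ℚ) ^ n = 1) : m = 0 := by
  obtain ⟨p, hp, hpa⟩ := Nat.exists_prime_and_dvd ha.ne'
  have : Fact p.Prime := ⟨hp⟩
  have ha0 : a ≠ 0 := by omega
  have val_a : padicValNat p a ≠ 0 := (dvd_iff_padicValNat_ne_zero ha0).1 hpa
  have val_b : padicValNat p b = 0 :=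
    padicValNat.eq_zero_of_not_dvd fun hpb => Nat.not_coprime_of_dvd_of_dvd hp.one_lt hpa hpb hab
  have val_eq := congrArg (padicValRat p) h
  rw [padicValRat.mul (zpow_ne_zero _ (mod_cast ha0)) (zpow_ne_zero _ (mod_cast hb)),
    padicValRat.zpow, padicValRat.zpow, padicValRat.of_nat, padicValRat.of_nat, val_b,
    padicValRat.one] at val_eq
  simpa [val_a] using val_eq

lemma multiplicativelyIndependent_natCast_of_coprime {a b : ℕ} (ha : 1 < a) (hb : 1 < b)
    (hab : a.Coprime b) : MultiplicativelyIndependent (a : ℚ) (b : ℚ) := fun _ _ h =>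
  ⟨left_exponent_eq_zero_of_coprime ha (by omega) hab h,
    left_exponent_eq_zero_of_coprime hb (by omega) hab.symm (mul_comm _ _ |>.trans h)⟩

lemma MultiplicativelyIndependent.linearIndependent_one_log_log {a b : ℚ}
    (hab : MultiplicativelyIndependent a b) (ha : 0 < a) (hb : 0 < b) :
    LinearIndependent ℚ ![1, Real.log a, Real.log b] := by
  rw [← LinearIndependent.iff_fractionRing ℤ ℚ, Fintype.linearIndependent_iff]
  intro c hc
  have relation : c 0 + c 1 * Real.log a + c 2 * Real.log b = 0 := by
    simpa [Fin.sum_univ_three] using hc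
  have log_prod : Real.log ((a ^ c 1 * b ^ c 2 : ℚ) : ℝ) = ((-c 0 : ℤ) : ℝ) := by
    have ha' : (a : ℝ) ≠ 0 := mod_cast ha.ne'
    have hb' : (b : ℝ) ≠ 0 := mod_cast hb.ne'
    push_cast
    rw [Real.log_mul (zpow_ne_zero _ ha') (zpow_ne_zero _ hb'), Real.log_zpow, Real.log_zpow]
    linarith
  have prod_eq_one : a ^ c 1 * b ^ c 2 = 1 := by
    by_contra hne
    exact (irrational_log_ratCast (by positivity) hne).ne_int _ log_prod
  obtain ⟨h1, h2⟩ := hab _ _ prod_eq_one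
  have h0 : c 0 = 0 := by simpa [h1, h2] using relation
  simp [Fin.forall_fin_succ, h0, h1, h2]

lemma irrational_or_irrational_of_linearIndependent {α β : ℝ}
    (h : LinearIndependent ℚ ![1, α, β]) {s : ℝ} (hs : s ≠ 0) (w₁ w₂ : ℚ) :
    Irrational (s * (α + w₁)) ∨ Irrational (s * (β + w₂)) := by
  by_contra! hrat
  obtain ⟨x₁, hx₁⟩ := exists_rat_of_not_irrational hrat.1
  obtain ⟨x₂, hx₂⟩ := exists_rat_of_not_irrational hrat.2
  have coeff_eq_zero (c₀ c₁ c₂ : ℚ) (hc : c₀ + c₁ * α + c₂ * β = 0) : c₁ = 0 ∧ c₂ = 0 := by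
    have hzero := Fintype.linearIndependent_iff.1 h ![c₀, c₁, c₂]
      (by simpa [Fin.sum_univ_three, Rat.smul_def] using hc)
    exact ⟨hzero 1, hzero 2⟩
  have relation : x₁ * (β + w₂) = x₂ * (α + w₁) := by
    rw [← hx₁, ← hx₂]
    ring
  have hx₁_zero : x₁ = 0 :=
    (coeff_eq_zero (x₁ * w₂ - x₂ * w₁) (-x₂) x₁ (by push_cast; linarith)).2
  have add_eq_zero : α + w₁ = 0 := by simpa [hx₁_zero, hs] using hx₁
  exact one_ne_zero (coeff_eq_zero w₁ 1 0 (by push_cast; linarith)).1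

theorem stmt18_general {a b : ℚ} (ha : 0 < a) (hb : 0 < b)
    (hab : MultiplicativelyIndependent a b) :
    (∀ (w₁ w₂ : ℚ) (s : ℝ), s ≠ 0 →
      Irrational (s * (Real.log a + w₁)) ∨ Irrational (s * (Real.log b + w₂))) ∧
    ∀ (d : ℕ) (i j : Fin d) (w : Fin d → ℚ) (s : ℝ), s ≠ 0 →
      ∀ x ∈ s • translateSet {y : Fin d → ℝ | y i = Real.log a ∧ y j = Real.log b}
          (fun k => (w k : ℝ)),
        Irrational (x i) ∨ Irrational (x j) := by
  have main (w₁ w₂ : ℚ) (s : ℝ) (hs : s ≠ 0) :=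
    irrational_or_irrational_of_linearIndependent
      (hab.linearIndependent_one_log_log ha hb) hs w₁ w₂
  refine ⟨main, ?_⟩
  rintro d i j w s hs _ ⟨_, ⟨y, ⟨hyi, hyj⟩, rfl⟩, rfl⟩
  simpa [hyi, hyj] using main (w i) (w j) s hs

/-- no dilate of an integer translate of the affine space
`{x : x₁ = ln 2, x₂ = ln 3}` contains a lattice point. -/
theorem stmt18 :
    (∀ (w₁ w₂ : ℤ) (s : ℝ), 0 < s →
      ¬ ∃ x₁ x₂ : ℤ, (x₁ : ℝ) = s * (Real.log 2 + (w₁ : ℝ)) ∧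
        (x₂ : ℝ) = s * (Real.log 3 + (w₂ : ℝ))) ∧
    ∀ (d : ℕ) (hd : 2 ≤ d), ∀ (w : Fin d → ℤ) (s : ℝ), 0 < s →
      ∀ x ∈ s • translateSet
          {y : Fin d → ℝ | y ⟨0, by omega⟩ = Real.log 2 ∧ y ⟨1, by omega⟩ = Real.log 3}
          (fun i => (w i : ℝ)),
        x ∉ latticePts d := by
  obtain ⟨scalar, affine⟩ := stmt18_general (a := (2 : ℕ)) (b := (3 : ℕ)) (by norm_num)
    (by norm_num) (multiplicativelyIndependent_natCast_of_coprime (by norm_num) (by norm_num)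
      (by norm_num))
  refine ⟨fun w₁ w₂ s hs ⟨x₁, x₂, hx₁, hx₂⟩ => ?_, fun d hd w s hs x hx hlat => ?_⟩
  · exact (scalar w₁ w₂ s hs.ne').elim (·.ne_int x₁ (by simpa using hx₁.symm))
      (·.ne_int x₂ (by simpa using hx₂.symm))
  · exact (affine d ⟨0, by omega⟩ ⟨1, by omega⟩ (fun k => w k) s hs.ne' x (by simpa using hx)).elim
      (fun h => (hlat _).elim h.ne_int) (fun h => (hlat _).elim h.ne_int)
end

section
/- Let P ⊆ ℝ^d be a full-dimensional polytope which does not contain the origin, let v be any point of P, and let λ > μ ≥ 0 be real numbers. Then vol(conv((P + μv) ∪ {0})) < vol(conv((P + λv) ∪ {0})), where vol denotes Lebesgue measure on ℝ^d; that is, the volume of the pseudopyramid ppyr(P + tv) = conv((P + tv) ∪ {0}) is strictly increasing in t ≥ 0. -/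
open Set MeasureTheory Pointwise

/-!
Translating by `-t • v` turns `ppyr(K + t • v)` into the convex hull of the fixed body `K` and the
apex `-t • v`. Increasing `t` pushes the apex along a ray away from `K`, so the hulls increase, and
a new apex in an old hull would express `0` as a convex combination of points of `K`. Thus the hulls
increase strictly; they are closed, and each is contained in the closure of its interior, so their
measures increase strictly as well.
-/

section OrderedField

variable {𝕜 E : Type*} [Field 𝕜] [LinearOrder 𝕜] [IsStrictOrderedRing 𝕜]
  [AddCommGroup E] [Module 𝕜 E] {K : Set E} {v : E} {a b : 𝕜}

lemma smul_add_smul_ne_zero_of_convex (hK : Convex 𝕜 K) (h0 : (0 : E) ∉ K) {x y : E}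
    (hx : x ∈ K) (hy : y ∈ K) (ha : 0 ≤ a) (hb : 0 ≤ b) (hab : 0 < a + b) :
    a • x + b • y ≠ 0 := by
  intro hzero
  have hmem : (a / (a + b)) • x + (b / (a + b)) • y ∈ K := convex_iff_div.1 hK hx hy ha hb hab
  rw [div_eq_inv_mul, div_eq_inv_mul, mul_smul, mul_smul, ← smul_add, hzero, smul_zero] at hmem
  exact h0 hmem

lemma neg_smul_mem_convexHull_insert (hv : v ∈ K) (ha : -1 ≤ a) (hab : a ≤ b) :
    -(a • v) ∈ convexHull 𝕜 (insert (-(b • v)) K) := by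
  have hline : Convex 𝕜 {t : 𝕜 | -(t • v) ∈ convexHull 𝕜 (insert (-(b • v)) K)} :=
    (convex_convexHull 𝕜 _).linear_preimage (-LinearMap.toSpanSingleton 𝕜 E v)
  refine hline.ordConnected.out (x := -1) (y := b) ?_ ?_ ⟨ha, hab⟩
  · simpa using subset_convexHull 𝕜 _ (mem_insert_of_mem _ hv)
  · exact subset_convexHull 𝕜 _ (mem_insert _ _)

lemma convexHull_insert_neg_smul_subset (hv : v ∈ K) (ha : -1 ≤ a) (hab : a ≤ b) :
    convexHull 𝕜 (insert (-(a • v)) K) ⊆ convexHull 𝕜 (insert (-(b • v)) K) :=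
  convexHull_min
    (insert_subset (neg_smul_mem_convexHull_insert hv ha hab)
      ((subset_insert _ _).trans (subset_convexHull 𝕜 _)))
    (convex_convexHull 𝕜 _)

lemma neg_smul_notMem_convexHull_insert (hK : Convex 𝕜 K) (h0 : (0 : E) ∉ K) (hv : v ∈ K)
    (hb : 0 < b) (hab : a < b) : -(b • v) ∉ convexHull 𝕜 (insert (-(a • v)) K) := by
  rw [convexHull_insert ⟨v, hv⟩, hK.convexHull_eq, convexJoin_singleton_left]
  simp only [mem_iUnion, not_exists]
  rintro p hp ⟨r, s, hr, hs, hrs, hcomb⟩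
  have hcoeff : 0 < b - r * a := by
    have hpos : 0 < r * (b - a) + s * b := convex_Ioi 0 (sub_pos.2 hab) hb hr hs hrs
    linear_combination hpos + b * hrs
  refine smul_add_smul_ne_zero_of_convex hK h0 hp hv hs hcoeff.le (by positivity) ?_
  calc s • p + (b - r * a) • v = (r • -(a • v) + s • p) + b • v := by module
    _ = 0 := by rw [hcomb, neg_add_cancel]

lemma convexHull_insert_neg_smul_ssubset (hK : Convex 𝕜 K) (h0 : (0 : E) ∉ K) (hv : v ∈ K)
    (ha : 0 ≤ a) (hab : a < b) :
    convexHull 𝕜 (insert (-(a • v)) K) ⊂ convexHull 𝕜 (insert (-(b • v)) K) :=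
  (ssubset_iff_of_subset (convexHull_insert_neg_smul_subset hv (by linarith) hab.le)).2
    ⟨-(b • v), subset_convexHull 𝕜 _ (mem_insert _ _),
      neg_smul_notMem_convexHull_insert hK h0 hv (ha.trans_lt hab) hab⟩

end OrderedField

section Topology

variable {E : Type*} [AddCommGroup E] [Module ℝ E] [TopologicalSpace E]
  [IsTopologicalAddGroup E] [ContinuousSMul ℝ E] {s t : Set E}

lemma isCompact_convexJoin (hs : IsCompact s) (ht : IsCompact t) :
    IsCompact (convexJoin ℝ s t) := by
  have himage : convexJoin ℝ s t =
      (fun p : ℝ × E × E ↦ AffineMap.lineMap p.2.1 p.2.2 p.1) '' (Icc (0 : ℝ) 1 ×ˢ s ×ˢ t) := by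
    ext z
    simp only [mem_convexJoin, segment_eq_image_lineMap, mem_image, Prod.exists, mem_prod]
    tauto
  rw [himage]
  refine (isCompact_Icc.prod (hs.prod ht)).image ?_
  simp only [AffineMap.lineMap_apply_module]
  fun_prop

lemma isCompact_convexHull_insert (hs : IsCompact s) (hconv : Convex ℝ s) (x : E) :
    IsCompact (convexHull ℝ (insert x s)) := by
  rcases s.eq_empty_or_nonempty with rfl | hne
  · simp
  · rw [convexHull_insert hne, hconv.convexHull_eq]
    exact isCompact_convexJoin isCompact_singleton hs

lemma subset_closure_interior_of_convex (hs : Convex ℝ s) (hint : (interior s).Nonempty) :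
    s ⊆ closure (interior s) := by
  rw [hs.closure_interior_eq_closure_of_nonempty_interior hint]
  exact subset_closure

end Topology

lemma measure_lt_measure_of_isClosed_of_ssubset {X : Type*} [TopologicalSpace X]
    [MeasurableSpace X] [OpensMeasurableSpace X] {μ : Measure X} [μ.IsOpenPosMeasure]
    {A B : Set X} (hA : IsClosed A) (hAfin : μ A ≠ ⊤) (hAB : A ⊂ B)
    (hB : B ⊆ closure (interior B)) : μ A < μ B := by
  by_contra! hle
  have hdiff : μ (B \ A) = 0 := by
    rw [measure_sdiff hAB.subset hA.nullMeasurableSet hAfin, tsub_eq_zero_of_le hle]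
  have hempty : interior B \ A = ∅ :=
    (isOpen_interior.sdiff hA).eq_empty_of_measure_zero
      (measure_mono_null (sdiff_subset_sdiff_left interior_subset) hdiff)
  exact hAB.not_subset (hB.trans (closure_minimal (sdiff_eq_empty.1 hempty) hA))

section Pseudopyramid

variable {E : Type*} [AddCommGroup E] [Module ℝ E]

/-- The pseudopyramid `ppyr(K)` over a set `K`: the convex hull of `K` and the origin. -/
def pseudopyramid (K : Set E) : Set E := convexHull ℝ (K ∪ {0})

lemma pseudopyramid_vadd (K : Set E) (w : E) :
    pseudopyramid (w +ᵥ K) = w +ᵥ convexHull ℝ (insert (-w) K) := by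
  rw [pseudopyramid, union_singleton, ← convexHull_vadd, vadd_set_insert, vadd_eq_add,
    add_neg_cancel]

lemma measure_pseudopyramid_vadd [MeasurableSpace E] [MeasurableAdd E] (μ : Measure E)
    [μ.IsAddLeftInvariant] (K : Set E) (w : E) :
    μ (pseudopyramid (w +ᵥ K)) = μ (convexHull ℝ (insert (-w) K)) := by
  rw [pseudopyramid_vadd, measure_vadd]

theorem stmt19_general [TopologicalSpace E] [IsTopologicalAddGroup E] [ContinuousSMul ℝ E]
    [T2Space E] [MeasurableSpace E] [BorelSpace E] (μ : Measure E) [μ.IsAddHaarMeasure]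
    {K : Set E} (hconv : Convex ℝ K) (hcomp : IsCompact K) (hint : (interior K).Nonempty)
    (h0 : (0 : E) ∉ K) {v : E} (hv : v ∈ K) :
    StrictMonoOn (fun t : ℝ ↦ μ (pseudopyramid (t • v +ᵥ K))) (Ici 0) := by
  intro a ha b _ hab
  simp only [measure_pseudopyramid_vadd]
  have hhull : IsCompact (convexHull ℝ (insert (-(a • v)) K)) :=
    isCompact_convexHull_insert hcomp hconv _
  have hK : K ⊆ convexHull ℝ (insert (-(b • v)) K) :=
    (subset_insert _ _).trans (subset_convexHull ℝ _)
  exact measure_lt_measure_of_isClosed_of_ssubset hhull.isClosed hhull.measure_ne_top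
    (convexHull_insert_neg_smul_ssubset hconv h0 hv ha hab)
    (subset_closure_interior_of_convex (convex_convexHull ℝ _) (hint.mono (interior_mono hK)))

end Pseudopyramid

lemma translateSet_eq_vadd {d : ℕ} (P : Set (Fin d → ℝ)) (w : Fin d → ℝ) :
    translateSet P w = w +ᵥ P :=
  image_congr fun x _ ↦ add_comm x w

/-- the volume of the pseudopyramid `conv((P + t•v) ∪ {0})` is strictly
increasing in `t ≥ 0`, for a full-dimensional polytope `P` not containing the origin
and `v ∈ P`. -/
theorem stmt19 {d : ℕ} (P : Set (Fin d → ℝ)) (hP : IsPolytope P)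
    (hfull : (interior P).Nonempty) (h0 : (0 : Fin d → ℝ) ∉ P)
    (v : Fin d → ℝ) (hv : v ∈ P) (mu fl : ℝ) (hmu : 0 ≤ mu) (hfl : mu < fl) :
    volume (convexHull ℝ (translateSet P (mu • v) ∪ {0})) <
    volume (convexHull ℝ (translateSet P (fl • v) ∪ {0})) := by
  obtain ⟨V, -, rfl⟩ := hP
  simpa only [pseudopyramid, translateSet_eq_vadd] using
    stmt19_general volume (convex_convexHull ℝ _) (V.finite_toSet.isCompact_convexHull ℝ) hfull h0
      hv hmu (hmu.trans hfl.le) hfl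
end
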